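/- arXiv:1310.7059 — 2 statements merged into one kernel-verified Lean document; each statement's English description precedes it below -/
import Mathlib

section
/- Fix integers m ≥ 2 and k ≥ 2. Then N'_{m,k}(α,β) = α^k β^m Σ_{j=0}^{m−1} Σ_{ℓ=0}^{k−1} H_{j,ℓ} · c_{j,ℓ} · α^j β^ℓ, where c_{j,ℓ} is the number of Condensed Catalan tableaux of size (k−1, m+k−2) (shape contained in the (k−1) × (m−1) rectangle) whose filling contains exactly j α's and ℓ β's, and H_{j,ℓ} = α^{m−j} Σ_{s=0}^{k−ℓ−1} β^s + β^{k−ℓ} Σ_{t=0}^{m−j−1} α^t + Σ_{t=1}^{m−j−1} Σ_{s=1}^{k−ℓ−1} α^t β^s is the sum of the weights of the possible Catalan fillings of the hook consisting of a first row of length m and first column of length k, when the inner tableau has k−1−ℓ α-indexed (free) rows and m−1−j β-indexed (free) columns. The identity holds in ℤ[α,β]. -/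
open scoped Classical
open Finset

/-- A Condensed Catalan tableau with `k` rows inside a rectangle of width `w`,
of shape `lam`: cells are `none` (empty), `some true` (an α) or `some false` (a β). -/
def IsCCT (k w : ℕ) (lam : Fin k → ℕ) (F : Fin k → Fin w → Option Bool) : Prop :=
  (∀ (i : Fin k) (c : Fin w), lam i ≤ (c : ℕ) → F i c = none) ∧
  (∀ (i : Fin k) (c c' : Fin w), F i c = some false → c' < c → F i c' = none) ∧
  (∀ (i i' : Fin k) (c : Fin w), F i c = some true → i' < i → F i' c = none) ∧
  (∀ (i : Fin k) (c : Fin w), (c : ℕ) < lam i →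
    (∀ i' : Fin k, i < i' → F i' c ≠ some true) →
    (∀ c' : Fin w, c < c' → (c' : ℕ) < lam i → F i c' ≠ some false) →
    F i c ≠ none)

/-- The number of α's in the filling. -/
def aCount (k w : ℕ) (F : Fin k → Fin w → Option Bool) : ℕ :=
  (Finset.univ.filter fun p : Fin k × Fin w => F p.1 p.2 = some true).card

/-- The number of β's in the filling. -/
def bCount (k w : ℕ) (F : Fin k → Fin w → Option Bool) : ℕ :=
  (Finset.univ.filter fun p : Fin k × Fin w => F p.1 p.2 = some false).card

/-- The binomial coefficient `binom a b` for integer arguments, with the convention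
that it vanishes whenever `b < 0` or `b > a`. -/
def icho (a b : ℤ) : ℤ := if 0 ≤ b ∧ b ≤ a then ((a.toNat).choose b.toNat : ℤ) else 0

/-! Removing the first row and the first column is a bijection from the tableaux counted by
`N'_{m,k}` onto pairs of a smaller tableau and a filling of the hook. A box of a tableau is empty
exactly when it lies outside the shape, has an α below it in its column or a β to its right in its
row. Hence the first row sees the smaller tableau only through its columns without α, and the first
column only through its rows without β. A row over `p` such columns contributes `x ^ p` if it
contains no β and `y * (1 + ⋯ + x ^ (p - 1))` if it does; columns behave symmetrically, and the
corner box contributes `x + y` unless a β in its row or an α in its column empties it. Adding up the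
four cases gives `H`. Finally, the α's of the smaller tableau lie in distinct columns and its β's in
distinct rows, so its numbers of α's and β's determine the numbers of free columns and rows.
-/

section Letters

variable {R : Type*} [CommSemiring R]

/-- The weight of the content of a single box: an empty box counts `1`, an α counts `x` and
a β counts `y`. -/
def letterWeight (x y : R) : Option Bool → R
  | none => 1
  | some true => x
  | some false => y

@[simp] theorem letterWeight_none (x y : R) : letterWeight x y none = 1 := rfl

@[simp] theorem letterWeight_alpha (x y : R) : letterWeight x y (some true) = x := rfl

@[simp] theorem letterWeight_beta (x y : R) : letterWeight x y (some false) = y := rfl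

theorem letterWeight_eq_ite_mul_ite (x y : R) (o : Option Bool) :
    letterWeight x y o = (if o = some true then x else 1) * (if o = some false then y else 1) := by
  rcases o with _ | _ | _ <;> simp

theorem pow_aCount_mul_pow_bCount (x y : R) {k w : ℕ} (F : Fin k → Fin w → Option Bool) :
    x ^ aCount k w F * y ^ bCount k w F = ∏ i, ∏ c, letterWeight x y (F i c) := by
  simp only [letterWeight_eq_ite_mul_ite, prod_mul_distrib, aCount, bCount, ← prod_const,
    prod_filter, Fintype.prod_prod_type]

end Letters

section ForcedWords

variable {n : ℕ} {b : Bool}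

/-- The rule for filling the first row (`b = false`) or the first column (`b = true`) of a tableau
outside its corner: a box is left empty exactly when it is blocked, from inside the tableau, or
some later box contains the letter `b`. -/
def IsForcedWord (b : Bool) (blocked : Fin n → Prop) (r : Fin n → Option Bool) : Prop :=
  ∀ c, r c = none ↔ blocked c ∨ ∃ c' > c, r c' = some b

theorem isForcedWord_cons {blocked : Fin (n + 1) → Prop} {v : Option Bool}
    {r : Fin n → Option Bool} :
    IsForcedWord b blocked (Fin.cons v r : Fin (n + 1) → Option Bool) ↔
      (v = none ↔ blocked 0 ∨ ∃ c, r c = some b) ∧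
        IsForcedWord b (fun c => blocked c.succ) r := by
  simp [IsForcedWord, Fin.forall_fin_succ, Fin.exists_fin_succ]

theorem isForcedWord_cons_and_exists_iff {blocked : Fin (n + 1) → Prop} {v : Option Bool}
    {r : Fin n → Option Bool} :
    (IsForcedWord b blocked (Fin.cons v r : Fin (n + 1) → Option Bool) ∧
        ∃ c, (Fin.cons v r : Fin (n + 1) → Option Bool) c = some b) ↔
      (v = none ∧ IsForcedWord b (fun c => blocked c.succ) r ∧ ∃ c, r c = some b) ∨
        (v = some b ∧ ¬ blocked 0 ∧
          IsForcedWord b (fun c => blocked c.succ) r ∧ ¬ ∃ c, r c = some b) := by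
  simp only [isForcedWord_cons, Fin.exists_fin_succ, Fin.cons_zero, Fin.cons_succ]
  grind

theorem isForcedWord_and_not_exists_iff {blocked : Fin n → Prop} {r : Fin n → Option Bool} :
    (IsForcedWord b blocked r ∧ ¬ ∃ c, r c = some b) ↔
      r = fun c => if blocked c then none else some !b := by
  constructor
  · rintro ⟨hforced, hb⟩
    funext c
    have hnone : r c = none ↔ blocked c := by
      grind [hforced c]
    by_cases hc : blocked c
    · simpa [hc] using hnone.2 hc
    · obtain ⟨d, hd⟩ := Option.ne_none_iff_exists'.1 (mt hnone.1 hc)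
      have hdb : d ≠ b := by
        rintro rfl
        exact hb ⟨c, hd⟩
      simp [hc, hd, Bool.eq_not_of_ne hdb]
  · rintro rfl
    simp [IsForcedWord]

variable {R : Type*} [CommSemiring R] (x y : R)

theorem sum_isForcedWord_of_not_exists (b : Bool) (blocked : Fin n → Prop) :
    ∑ r with IsForcedWord b blocked r ∧ ¬ ∃ c, r c = some b, ∏ c, letterWeight x y (r c) =
      letterWeight x y (some !b) ^ #{c | ¬ blocked c} := by
  simp only [isForcedWord_and_not_exists_iff, sum_filter, sum_ite_eq', mem_univ, if_true]
  simp only [apply_ite (letterWeight x y), letterWeight_none, prod_ite, prod_const_one, one_mul,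
    prod_const]

theorem sum_isForcedWord_of_exists_succ (b : Bool) (blocked : Fin (n + 1) → Prop) :
    ∑ r with IsForcedWord b blocked r ∧ ∃ c, r c = some b, ∏ c, letterWeight x y (r c) =
      (∑ r with IsForcedWord b (fun c => blocked c.succ) r ∧ ∃ c, r c = some b,
          ∏ c, letterWeight x y (r c)) +
        if blocked 0 then 0 else letterWeight x y (some b) *
          ∑ r with IsForcedWord b (fun c => blocked c.succ) r ∧ ¬ ∃ c, r c = some b,
            ∏ c, letterWeight x y (r c) := by
  simp only [sum_filter]
  rw [← (Fin.consEquiv fun _ => Option Bool).sum_comp, Fintype.sum_prod_type]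
  simp only [Fin.consEquiv, Equiv.coe_fn_mk, isForcedWord_cons_and_exists_iff, Fin.prod_univ_succ,
    Fin.cons_zero, Fin.cons_succ, Fintype.sum_option, Fintype.sum_bool]
  by_cases h : blocked 0 <;> cases b <;> simp [h, mul_sum]

theorem sum_isForcedWord_of_exists (b : Bool) (blocked : Fin n → Prop) :
    ∑ r with IsForcedWord b blocked r ∧ ∃ c, r c = some b, ∏ c, letterWeight x y (r c) =
      letterWeight x y (some b) *
        ∑ t ∈ range #{c | ¬ blocked c}, letterWeight x y (some !b) ^ t := by
  induction n with
  | zero => simp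
  | succ n ih =>
    rw [sum_isForcedWord_of_exists_succ, sum_isForcedWord_of_not_exists, ih,
      Fin.card_filter_univ_succ]
    by_cases h : blocked 0
    · simp [h]
    · simp [h, sum_range_succ, mul_add]

theorem sum_isForcedWord_mul_ite (b : Bool) (blocked : Fin n → Prop) (u z : R) :
    ∑ r with IsForcedWord b blocked r,
        (∏ c, letterWeight x y (r c)) * (if ∃ c, r c = some b then u else z) =
      letterWeight x y (some b) *
          (∑ t ∈ range #{c | ¬ blocked c}, letterWeight x y (some !b) ^ t) * u +
        letterWeight x y (some !b) ^ #{c | ¬ blocked c} * z := by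
  simp only [mul_ite, sum_ite, filter_filter, ← sum_mul, sum_isForcedWord_of_exists,
    sum_isForcedWord_of_not_exists]

end ForcedWords

section Hook

variable {h w : ℕ} {R : Type*} [CommSemiring R] (x y : R)

/-- The generating polynomial `H_{j,ℓ}` of the hook fillings, as a function of `a = m - j` and
`b = k - ℓ`. -/
def hookPoly (a b : ℕ) : R :=
  x ^ a * (∑ s ∈ range b, y ^ s) + y ^ b * (∑ t ∈ range a, x ^ t) +
    ∑ t ∈ Icc 1 (a - 1), ∑ s ∈ Icc 1 (b - 1), x ^ t * y ^ s

theorem sum_Icc_one_pow (n : ℕ) : ∑ t ∈ Icc 1 n, x ^ t = x * ∑ t ∈ range n, x ^ t := by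
  rw [← Ico_add_one_right_eq_Icc, sum_Ico_eq_sum_range, mul_sum]
  simp only [Nat.add_sub_cancel, pow_add, pow_one]

theorem hookPoly_succ_succ (p q : ℕ) :
    hookPoly x y (p + 1) (q + 1) =
      y * (∑ t ∈ range p, x ^ t) * (x * (∑ s ∈ range q, y ^ s) + y ^ q) +
        x ^ p * (x * (∑ s ∈ range q, y ^ s) + y ^ q * (x + y)) := by
  simp only [hookPoly, Nat.add_sub_cancel, ← sum_mul_sum, sum_Icc_one_pow, sum_range_succ]
  ring

/-- The possible contents `(r, q, v)` of a hook of width `w + 1` and height `h + 1`: `r` fills the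
first row and `q` the first column, both without the corner box, which contains `v`. -/
abbrev HookContents (h w : ℕ) : Type :=
  (Fin w → Option Bool) × (Fin h → Option Bool) × Option Bool

/-- The Catalan fillings of a hook around an inner tableau. The columns of the inner tableau with an
α are `rowBlocked` (the first row is empty there) and its rows with a β are `colBlocked` (the first
column is empty there); the corner is empty exactly when a β or an α of the hook makes it so. -/
def IsHookFilling (rowBlocked : Fin w → Prop) (colBlocked : Fin h → Prop)
    (t : HookContents h w) : Prop :=
  IsForcedWord false rowBlocked t.1 ∧ IsForcedWord true colBlocked t.2.1 ∧
    (t.2.2 = none ↔ (∃ c, t.1 c = some false) ∨ ∃ i, t.2.1 i = some true)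

theorem sum_with_isHookFilling {M : Type*} [AddCommMonoid M] (rowBlocked : Fin w → Prop)
    (colBlocked : Fin h → Prop) (f : HookContents h w → M) :
    ∑ t with IsHookFilling rowBlocked colBlocked t, f t =
      ∑ r with IsForcedWord false rowBlocked r, ∑ q with IsForcedWord true colBlocked q,
        ∑ v with (v = none ↔ (∃ c, r c = some false) ∨ ∃ i, q i = some true), f (r, q, v) := by
  rw [sum_finset_product _ {r | IsForcedWord false rowBlocked r} fun r => {t |
    IsForcedWord true colBlocked t.1 ∧
      (t.2 = none ↔ (∃ c, r c = some false) ∨ ∃ i, t.1 i = some true)}]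
  · refine sum_congr rfl fun r _ => sum_finset_product _ _ _ fun t => ?_
    simp only [mem_filter_univ]
  · intro t
    simp only [mem_filter_univ]
    rfl

theorem sum_letterWeight_with_eq_none_iff (P : Prop) [Decidable P] :
    ∑ v with (v = none ↔ P), letterWeight x y v = if P then 1 else x + y := by
  by_cases hP : P <;> simp [hP, sum_filter]

/-- The contribution of the hook to the weight of a tableau: the product over its boxes. -/
def hookWeight (t : HookContents h w) : R :=
  (∏ c, letterWeight x y (t.1 c)) * ((∏ i, letterWeight x y (t.2.1 i)) * letterWeight x y t.2.2)

theorem sum_hookWeight (rowBlocked : Fin w → Prop) (colBlocked : Fin h → Prop) :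
    ∑ t with IsHookFilling rowBlocked colBlocked t, hookWeight x y t =
      hookPoly x y (#{c | ¬ rowBlocked c} + 1) (#{i | ¬ colBlocked i} + 1) := by
  set columnSum : R → R := fun z => ∑ q with IsForcedWord true colBlocked q,
    (∏ i, letterWeight x y (q i)) * if ∃ i, q i = some true then 1 else z
  calc
    _ = ∑ r with IsForcedWord false rowBlocked r, (∏ c, letterWeight x y (r c)) *
          if ∃ c, r c = some false then columnSum 1 else columnSum (x + y) := by
      simp only [sum_with_isHookFilling, hookWeight, ← mul_sum, sum_letterWeight_with_eq_none_iff,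
        ite_or]
      refine sum_congr rfl fun r _ => ?_
      split_ifs <;> simp [columnSum]
    _ = _ := by
      simp only [columnSum, sum_isForcedWord_mul_ite, hookPoly_succ_succ, letterWeight_alpha,
        letterWeight_beta, Bool.not_true, Bool.not_false, mul_one]

end Hook

theorem isCCT_iff {k w : ℕ} {lam : Fin k → ℕ} {F : Fin k → Fin w → Option Bool} :
    IsCCT k w lam F ↔ ∀ i c, F i c = none ↔
      lam i ≤ c ∨ (∃ i' > i, F i' c = some true) ∨ ∃ c' > c, F i c' = some false := by
  constructor
  · rintro ⟨houtside, hbeta, halpha, hfilled⟩ i c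
    grind
  · intro h
    refine ⟨?_, ?_, ?_, ?_⟩ <;> grind

theorem card_filter_not_add_card_of_injOn {α β : Type*} [Fintype β] {P : β → Prop} {s : Finset α}
    {f : α → β} (hf : Set.InjOn f s) (hP : ∀ b, P b ↔ ∃ a ∈ s, f a = b) :
    #{b | ¬ P b} + #s = Fintype.card β := by
  have himage : ({b | ¬ P b} : Finset β) = (image f s)ᶜ := by
    ext b
    simp [hP]
  rw [himage, ← card_image_of_injOn hf, card_compl_add_card]

/-- The column `c` of `F` contains an α, so that a row added on top of `F` is empty there; the other
columns are the β-indexed (free) ones. -/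
def ColumnHasAlpha {k w : ℕ} (F : Fin k → Fin w → Option Bool) (c : Fin w) : Prop :=
  ∃ i, F i c = some true

/-- The row `i` of `F` contains a β, so that a column added to the left of `F` is empty there; the
other rows are the α-indexed (free) ones. -/
def RowHasBeta {k w : ℕ} (F : Fin k → Fin w → Option Bool) (i : Fin k) : Prop :=
  ∃ c, F i c = some false

namespace IsCCT

variable {k w : ℕ} {lam : Fin k → ℕ} {F : Fin k → Fin w → Option Bool}

theorem card_not_columnHasAlpha_add_aCount (hF : IsCCT k w lam F) :
    #{c | ¬ ColumnHasAlpha F c} + aCount k w F = w := by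
  have hinj : Set.InjOn Prod.snd {p : Fin k × Fin w | F p.1 p.2 = some true} := by
    rintro ⟨i, c⟩ hi ⟨j, _⟩ hj rfl
    have := hF.2.2.1 i j
    have := hF.2.2.1 j i
    grind
  rw [aCount, card_filter_not_add_card_of_injOn (by simpa using hinj) (by simp [ColumnHasAlpha]),
    Fintype.card_fin]

theorem card_not_rowHasBeta_add_bCount (hF : IsCCT k w lam F) :
    #{i | ¬ RowHasBeta F i} + bCount k w F = k := by
  have hinj : Set.InjOn Prod.fst {p : Fin k × Fin w | F p.1 p.2 = some false} := by
    rintro ⟨i, c⟩ hc ⟨_, d⟩ hd rfl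
    have := hF.2.1 i c d
    have := hF.2.1 i d c
    grind
  rw [bCount, card_filter_not_add_card_of_injOn (by simpa using hinj) (by simp [RowHasBeta]),
    Fintype.card_fin]

end IsCCT

section AttachHook

variable {h w : ℕ}

/-- The filling of an `(h + 1) × (w + 1)` rectangle with first row and column given by the hook
filling `t = (r, q, v)` and remaining boxes given by `G`. -/
def attachHook (t : HookContents h w) (G : Fin h → Fin w → Option Bool) :
    Fin (h + 1) → Fin (w + 1) → Option Bool :=
  Fin.cons (Fin.cons t.2.2 t.1 : Fin (w + 1) → Option Bool)
    fun i => (Fin.cons (t.2.1 i) (G i) : Fin (w + 1) → Option Bool)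

theorem prod_letterWeight_attachHook {R : Type*} [CommSemiring R] (x y : R)
    (t : HookContents h w) (G : Fin h → Fin w → Option Bool) :
    ∏ i, ∏ c, letterWeight x y (attachHook t G i c) =
      hookWeight x y t * ∏ i, ∏ c, letterWeight x y (G i c) := by
  simp only [Fin.prod_univ_succ, attachHook, Fin.cons_zero, Fin.cons_succ, prod_mul_distrib,
    hookWeight]
  ring

theorem isCCT_attachHook {L : Fin (h + 1) → ℕ} {lam : Fin h → ℕ} (hL₀ : L 0 = w + 1)
    (hL : ∀ i, L i.succ = lam i + 1)
    {t : HookContents h w} {G : Fin h → Fin w → Option Bool} :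
    IsCCT (h + 1) (w + 1) L (attachHook t G) ↔
      IsCCT h w lam G ∧ IsHookFilling (ColumnHasAlpha G) (RowHasBeta G) t := by
  let IsForcedBox : Fin (h + 1) → Fin (w + 1) → Prop := fun i c => attachHook t G i c = none ↔
    L i ≤ c ∨ (∃ i' > i, attachHook t G i' c = some true) ∨
      ∃ c' > c, attachHook t G i c' = some false
  have hcorner : IsForcedBox 0 0 ↔
      (t.2.2 = none ↔ (∃ c, t.1 c = some false) ∨ ∃ i, t.2.1 i = some true) := by
    simp [IsForcedBox, attachHook, Fin.exists_fin_succ, hL₀, or_comm]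
  have hrow : (∀ c : Fin w, IsForcedBox 0 c.succ) ↔ IsForcedWord false (ColumnHasAlpha G) t.1 := by
    simp [IsForcedBox, attachHook, Fin.exists_fin_succ, hL₀, IsForcedWord, ColumnHasAlpha,
      Fin.is_lt, not_le_of_gt]
  have hcolumn : (∀ i : Fin h, IsForcedBox i.succ 0) ↔
      IsForcedWord true (RowHasBeta G) t.2.1 := by
    simp [IsForcedBox, attachHook, Fin.exists_fin_succ, hL, IsForcedWord, RowHasBeta, or_comm]
  have hinner : (∀ (i : Fin h) (c : Fin w), IsForcedBox i.succ c.succ) ↔ IsCCT h w lam G := by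
    simp [IsForcedBox, attachHook, Fin.exists_fin_succ, hL, isCCT_iff]
  have hboxes : IsCCT (h + 1) (w + 1) L (attachHook t G) ↔ ∀ i c, IsForcedBox i c := isCCT_iff
  rw [hboxes]
  simp only [Fin.forall_fin_succ, forall_and, hcorner, hrow, hcolumn, hinner, IsHookFilling,
    and_comm, and_assoc]

/-- The shape obtained by adding a hook to `lam`, that is, a first row of full length `w + 1` and a
box at the front of each row. Shapes are recorded by their row lengths. -/
def addHook (lam : Fin h → Fin (w + 1)) : Fin (h + 1) → Fin (w + 2) :=
  Fin.cons (Fin.last _) fun i => (lam i).succ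

/-- The Condensed Catalan tableaux of size `(k, k + w)`, as pairs of a shape (given by its row
lengths) and a filling. -/
noncomputable def catalanTableaux (k w : ℕ) :
    Finset ((Fin k → Fin (w + 1)) × (Fin k → Fin w → Option Bool)) :=
  {p | (∀ i j : Fin k, i ≤ j → (p.1 j : ℕ) ≤ (p.1 i : ℕ)) ∧
    IsCCT k w (fun i => (p.1 i : ℕ)) p.2}

/-- The tableaux summed over in `N'_{m,k}`, with `m = w + 1` and `k = h + 1`: those whose shape has
first row of full length `m` and `k` nonzero rows. -/
noncomputable def fullCatalanTableaux (h w : ℕ) :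
    Finset ((Fin (h + 1) → Fin (w + 2)) × (Fin (h + 1) → Fin (w + 1) → Option Bool)) :=
  {p | (∀ i j : Fin (h + 1), i ≤ j → (p.1 j : ℕ) ≤ (p.1 i : ℕ)) ∧
    (p.1 0 : ℕ) = w + 1 ∧ (∀ i : Fin (h + 1), 1 ≤ (p.1 i : ℕ)) ∧
    IsCCT (h + 1) (w + 1) (fun i => (p.1 i : ℕ)) p.2}

theorem addHook_attachHook_mem_fullCatalanTableaux {lam : Fin h → Fin (w + 1)}
    {G : Fin h → Fin w → Option Bool} {t : HookContents h w} :
    (addHook lam, attachHook t G) ∈ fullCatalanTableaux h w ↔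
      (lam, G) ∈ catalanTableaux h w ∧ IsHookFilling (ColumnHasAlpha G) (RowHasBeta G) t := by
  have hcct := isCCT_attachHook (L := fun i => (addHook lam i : ℕ)) (lam := fun i => (lam i : ℕ))
    (t := t) (G := G) (by simp [addHook]) (by simp [addHook])
  have hanti : (∀ i j, i ≤ j → (addHook lam j : ℕ) ≤ addHook lam i) ↔
      ∀ i j, i ≤ j → (lam j : ℕ) ≤ lam i := by
    simp [addHook, Fin.forall_fin_succ, Fin.le_last]
  have hpos : ∀ i, 1 ≤ (addHook lam i : ℕ) := by
    simp [addHook, Fin.forall_fin_succ]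
  have hfirst : (addHook lam 0 : ℕ) = w + 1 := by
    simp [addHook]
  simp only [fullCatalanTableaux, catalanTableaux, mem_filter_univ, hanti, hfirst, hpos, hcct,
    implies_true, true_and, and_assoc]

theorem addHook_injective : Function.Injective (addHook (h := h) (w := w)) := by
  intro lam mu hlm
  funext i
  simpa [addHook] using congr_fun hlm i.succ

theorem exists_addHook_eq {lam : Fin (h + 1) → Fin (w + 2)} (h₀ : (lam 0 : ℕ) = w + 1)
    (hpos : ∀ i, 1 ≤ (lam i : ℕ)) : ∃ mu, addHook mu = lam := by
  have hne : ∀ i : Fin h, lam i.succ ≠ 0 := fun i hi => by simpa [hi] using hpos i.succ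
  refine ⟨fun i => (lam i.succ).pred (hne i), funext fun i => ?_⟩
  cases i using Fin.cases with
  | zero => exact Fin.ext h₀.symm
  | succ i => simp [addHook]

theorem attachHook_inj {s t : HookContents h w}
    {G H : Fin h → Fin w → Option Bool} :
    attachHook s G = attachHook t H ↔ s = t ∧ G = H := by
  simp only [attachHook, Prod.ext_iff, funext_iff, Fin.forall_fin_succ, Fin.cons_zero,
    Fin.cons_succ, forall_and]
  tauto

theorem exists_attachHook_eq (F : Fin (h + 1) → Fin (w + 1) → Option Bool) :
    ∃ t G, attachHook t G = F := by
  refine ⟨(fun c => F 0 c.succ, fun i => F i.succ 0, F 0 0), fun i c => F i.succ c.succ, ?_⟩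
  funext i c
  cases i using Fin.cases <;> cases c using Fin.cases <;> rfl

theorem sum_fullCatalanTableaux {M : Type*} [AddCommMonoid M]
    (f : (Fin (h + 1) → Fin (w + 1) → Option Bool) → M) :
    ∑ p ∈ fullCatalanTableaux h w, f p.2 =
      ∑ p ∈ catalanTableaux h w,
        ∑ t with IsHookFilling (ColumnHasAlpha p.2) (RowHasBeta p.2) t, f (attachHook t p.2) := by
  rw [sum_sigma']
  symm
  refine sum_nbij (fun z => (addHook z.1.1, attachHook z.2 z.1.2)) ?_ ?_ ?_ fun _ _ => rfl
  · rintro ⟨⟨lam, G⟩, t⟩ hz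
    simpa [addHook_attachHook_mem_fullCatalanTableaux] using hz
  · rintro ⟨⟨lam, G⟩, t⟩ - ⟨⟨mu, H⟩, s⟩ - hz
    simp only [Prod.mk.injEq, attachHook_inj] at hz
    obtain ⟨hlm, rfl, rfl⟩ := hz
    obtain rfl := addHook_injective hlm
    rfl
  · rintro ⟨lam, F⟩ hp
    obtain ⟨-, hfirst, hpos, -⟩ := (mem_filter_univ _).1 hp
    obtain ⟨mu, rfl⟩ := exists_addHook_eq hfirst hpos
    obtain ⟨t, G, rfl⟩ := exists_attachHook_eq F
    exact ⟨⟨(mu, G), t⟩, by simpa [addHook_attachHook_mem_fullCatalanTableaux] using hp, rfl⟩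

end AttachHook

theorem sum_fullCatalanTableaux_pow_counts {R : Type*} [CommSemiring R] (x y : R) (h w : ℕ) :
    ∑ p ∈ fullCatalanTableaux h w,
        x ^ aCount (h + 1) (w + 1) p.2 * y ^ bCount (h + 1) (w + 1) p.2 =
      ∑ p ∈ catalanTableaux h w, hookPoly x y (w + 1 - aCount h w p.2) (h + 1 - bCount h w p.2) *
        (x ^ aCount h w p.2 * y ^ bCount h w p.2) := by
  simp only [pow_aCount_mul_pow_bCount]
  rw [sum_fullCatalanTableaux fun F => ∏ i, ∏ c, letterWeight x y (F i c)]
  refine sum_congr rfl fun p hp => ?_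
  have hcct := ((mem_filter_univ _).1 hp).2
  have hα := hcct.card_not_columnHasAlpha_add_aCount
  have hβ := hcct.card_not_rowHasBeta_add_bCount
  simp only [prod_letterWeight_attachHook, ← sum_mul, sum_hookWeight]
  congr 2 <;> omega

/-- The Condensed Catalan tableaux of size `(k, k + w)` with `j` α's and `l` β's; the coefficients
`c_{j,ℓ}` are their numbers. -/
noncomputable def catalanTableauxWith (k w j l : ℕ) :
    Finset ((Fin k → Fin (w + 1)) × (Fin k → Fin w → Option Bool)) :=
  {p | (∀ i j : Fin k, i ≤ j → (p.1 j : ℕ) ≤ (p.1 i : ℕ)) ∧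
    IsCCT k w (fun i => (p.1 i : ℕ)) p.2 ∧ aCount k w p.2 = j ∧ bCount k w p.2 = l}

theorem sum_catalanTableaux_comp_counts {M : Type*} [AddCommMonoid M] (h w : ℕ) (f : ℕ → ℕ → M) :
    ∑ p ∈ catalanTableaux h w, f (aCount h w p.2) (bCount h w p.2) =
      ∑ j ∈ range (w + 1), ∑ l ∈ range (h + 1), #(catalanTableauxWith h w j l) • f j l := by
  have hmaps : ∀ p ∈ catalanTableaux h w,
      (aCount h w p.2, bCount h w p.2) ∈ range (w + 1) ×ˢ range (h + 1) := by
    intro p hp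
    have hcct := ((mem_filter_univ _).1 hp).2
    have hα := hcct.card_not_columnHasAlpha_add_aCount
    have hβ := hcct.card_not_rowHasBeta_add_bCount
    simp only [mem_product, mem_range]
    omega
  rw [← sum_fiberwise_of_maps_to' hmaps fun z => f z.1 z.2, sum_product]
  simp only [sum_const, Prod.mk.injEq, catalanTableaux, filter_filter, and_assoc]
  rfl

theorem stmt10_general {R : Type*} [CommSemiring R] (x y : R) (h w : ℕ) :
    ∑ p ∈ fullCatalanTableaux h w, x ^ (h + 1 + aCount (h + 1) (w + 1) p.2) *
        y ^ (w + 1 + bCount (h + 1) (w + 1) p.2) =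
      x ^ (h + 1) * y ^ (w + 1) * ∑ j ∈ range (w + 1), ∑ l ∈ range (h + 1),
        hookPoly x y (w + 1 - j) (h + 1 - l) * (#(catalanTableauxWith h w j l) : R) *
          x ^ j * y ^ l := by
  calc
    _ = x ^ (h + 1) * y ^ (w + 1) * ∑ p ∈ fullCatalanTableaux h w,
          x ^ aCount (h + 1) (w + 1) p.2 * y ^ bCount (h + 1) (w + 1) p.2 := by
      rw [mul_sum]
      exact sum_congr rfl fun p _ => by ring
    _ = _ := by
      rw [sum_fullCatalanTableaux_pow_counts, sum_catalanTableaux_comp_counts h w fun j l =>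
        hookPoly x y (w + 1 - j) (h + 1 - l) * (x ^ j * y ^ l)]
      simp only [nsmul_eq_mul, mul_assoc, mul_left_comm]

/-- The hook recursion for `N'_{m,k}` (m, k ≥ 2): `N'_{m,k}(α,β)` equals
`α^k β^m Σ_{j=0}^{m-1} Σ_{ℓ=0}^{k-1} H_{j,ℓ} · c_{j,ℓ} · α^j β^ℓ`, where `c_{j,ℓ}`
is the number of Condensed Catalan tableaux of size `(k-1, m+k-2)` (shape inside the
`(k-1) × (m-1)` rectangle) with exactly `j` α's and `ℓ` β's in the filling, and
`H_{j,ℓ}` is the generating function of the fillings of the `k–m` hook. Here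
`α = X 0`, `β = X 1` in `ℤ[α,β]`. -/
theorem stmt10 (m k : ℕ) (hm : 2 ≤ m) (hk : 2 ≤ k) :
    ∑ pr ∈ Finset.univ.filter
        (fun pr : (Fin k → Fin (m + 1)) × (Fin k → Fin m → Option Bool) =>
          (∀ i j : Fin k, i ≤ j → (pr.1 j : ℕ) ≤ (pr.1 i : ℕ)) ∧
          (pr.1 ⟨0, by omega⟩ : ℕ) = m ∧
          (∀ i : Fin k, 1 ≤ (pr.1 i : ℕ)) ∧
          IsCCT k m (fun i => (pr.1 i : ℕ)) pr.2),
        (MvPolynomial.X 0 : MvPolynomial (Fin 2) ℤ) ^ (k + aCount k m pr.2) *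
          MvPolynomial.X 1 ^ (m + bCount k m pr.2)
      = MvPolynomial.X 0 ^ k * MvPolynomial.X 1 ^ m *
        ∑ j ∈ Finset.range m, ∑ l ∈ Finset.range k,
          ((MvPolynomial.X 0 : MvPolynomial (Fin 2) ℤ) ^ (m - j) *
              (∑ s ∈ Finset.range (k - l), MvPolynomial.X 1 ^ s) +
            MvPolynomial.X 1 ^ (k - l) *
              (∑ t ∈ Finset.range (m - j), MvPolynomial.X 0 ^ t) +
            ∑ t ∈ Finset.Icc 1 (m - j - 1), ∑ s ∈ Finset.Icc 1 (k - l - 1),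
              MvPolynomial.X 0 ^ t * MvPolynomial.X 1 ^ s) *
          ((Finset.univ.filter
              (fun qr : (Fin (k - 1) → Fin ((m - 1) + 1)) ×
                  (Fin (k - 1) → Fin (m - 1) → Option Bool) =>
                (∀ i j' : Fin (k - 1), i ≤ j' → (qr.1 j' : ℕ) ≤ (qr.1 i : ℕ)) ∧
                IsCCT (k - 1) (m - 1) (fun i => (qr.1 i : ℕ)) qr.2 ∧
                aCount (k - 1) (m - 1) qr.2 = j ∧
                bCount (k - 1) (m - 1) qr.2 = l)).card : MvPolynomial (Fin 2) ℤ) *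
          MvPolynomial.X 0 ^ j * MvPolynomial.X 1 ^ l := by
  obtain ⟨w, rfl⟩ := Nat.exists_eq_add_of_le' (one_le_two.trans hm)
  obtain ⟨h, rfl⟩ := Nat.exists_eq_add_of_le' (one_le_two.trans hk)
  exact stmt10_general (MvPolynomial.X 0) (MvPolynomial.X 1) h w
end

section
/- Fix integers m ≥ 0 and k ≥ 0. Then N_{m,k}(α,β) = α^k β^m Σ_{m'=0}^{m} Σ_{k'=0}^{k} α^{−k'} β^{−m'} N'_{m',k'}(α,β), i.e. N_{m,k}(α,β) = Σ_{m'=0}^{m} Σ_{k'=0}^{k} α^{k−k'} β^{m−m'} N'_{m',k'}(α,β), where by convention N'_{0,0}(α,β) = 1 and N'_{m',k'}(α,β) = 0 if exactly one of m', k' is zero. The identity holds in ℤ[α,β]. -/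
open scoped Classical
open Finset

/-- `N_{m,k}(α,β)`: the sum of weights of all Condensed Catalan tableaux of size
`(k, k+m)` (shape contained in the `k × m` rectangle), with `α = X 0`, `β = X 1`. -/
noncomputable def Ntab (m k : ℕ) : MvPolynomial (Fin 2) ℤ :=
  ∑ pr ∈ Finset.univ.filter
      (fun pr : (Fin k → Fin (m + 1)) × (Fin k → Fin m → Option Bool) =>
        (∀ i j : Fin k, i ≤ j → (pr.1 j : ℕ) ≤ (pr.1 i : ℕ)) ∧
        IsCCT k m (fun i => (pr.1 i : ℕ)) pr.2),
    (MvPolynomial.X 0 : MvPolynomial (Fin 2) ℤ) ^ (k + aCount k m pr.2) *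
      MvPolynomial.X 1 ^ (m + bCount k m pr.2)

/-- `N'_{m,k}(α,β)`: the sum of weights of Condensed Catalan tableaux of size
`(k, k+m)` whose shape has first row exactly `m` and exactly `k` nonzero rows, with
the conventions `N'_{0,0} = 1` and `N'_{m,k} = 0` when exactly one of `m, k` is
zero. -/
noncomputable def N'tab (m k : ℕ) : MvPolynomial (Fin 2) ℤ :=
  if m = 0 ∧ k = 0 then 1
  else if m = 0 ∨ k = 0 then 0
  else
    ∑ pr ∈ Finset.univ.filter
        (fun pr : (Fin k → Fin (m + 1)) × (Fin k → Fin m → Option Bool) =>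
          (∀ i j : Fin k, i ≤ j → (pr.1 j : ℕ) ≤ (pr.1 i : ℕ)) ∧
          (∀ h : 0 < k, (pr.1 ⟨0, h⟩ : ℕ) = m) ∧
          (∀ i : Fin k, 1 ≤ (pr.1 i : ℕ)) ∧
          IsCCT k m (fun i => (pr.1 i : ℕ)) pr.2),
      (MvPolynomial.X 0 : MvPolynomial (Fin 2) ℤ) ^ (k + aCount k m pr.2) *
        MvPolynomial.X 1 ^ (m + bCount k m pr.2)

/-!
Deleting the empty rows and the empty columns of the ambient `k × m` rectangle turns a condensed
Catalan tableau into one whose shape fills its bounding box, of width `m'` and height `k'` say.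
Nothing is lost, since the deleted boxes lie outside the shape, and only the weight changes, by the
factor `α ^ (k - k') * β ^ (m - m')`. Grouping tableaux by bounding box gives the identity. Writing
the rectangle as `(k' + r) × (m' + s)` makes the inverse operation a `Fin.append`.
-/

lemma castAdd_lt_natAdd {k r : ℕ} (i : Fin k) (j : Fin r) : Fin.castAdd r i < Fin.natAdd k j :=
  Fin.lt_def.2 (Nat.lt_add_right _ i.is_lt)

lemma antitone_append_zero_iff {α : Type*} [AddMonoid α] [Preorder α] [CanonicallyOrderedAdd α]
    {k r : ℕ} {f : Fin k → α} : Antitone (Fin.append f (0 : Fin r → α)) ↔ Antitone f := by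
  simp [Antitone, Fin.forall_fin_add, (Fin.strictMono_castAdd r).le_iff_le,
    (castAdd_lt_natAdd _ _).not_ge]

/-- A filling of the `k × m` rectangle by empty boxes, α's and β's, paired with a sequence of row
lengths at most `m`. These are the pairs over which `Ntab` and `N'tab` sum, before any condition
is imposed. -/
abbrev ShapedFilling (k m : ℕ) : Type :=
  (Fin k → Fin (m + 1)) × (Fin k → Fin m → Option Bool)

namespace ShapedFilling

section Basic

variable {k m : ℕ}

/-- The row lengths of the shape, as natural numbers. -/
def shape (T : ShapedFilling k m) (i : Fin k) : ℕ :=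
  T.1 i

/-- The first component is a partition and the second one is a condensed Catalan tableau of that
shape. -/
def IsCondensedCatalan (T : ShapedFilling k m) : Prop :=
  Antitone T.shape ∧ IsCCT k m T.shape T.2

/-- The number of columns of the bounding box of the shape, which is the length of its longest row;
it is `0` if there are no rows. -/
def width (T : ShapedFilling k m) : ℕ :=
  univ.sup T.shape

/-- The number of rows of the bounding box of the shape, counted as the number of nonzero rows. -/
def height (T : ShapedFilling k m) : ℕ :=
  #{i | T.shape i ≠ 0}

/-- The weight `a ^ (k + #α) * b ^ (m + #β)`, with `a` and `b` substituted for α and β. -/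
def weight {R : Type*} [Monoid R] (a b : R) (T : ShapedFilling k m) : R :=
  a ^ (k + aCount k m T.2) * b ^ (m + bCount k m T.2)

lemma shape_le (T : ShapedFilling k m) (i : Fin k) : T.shape i ≤ m :=
  (T.1 i).is_le

lemma width_le_iff {T : ShapedFilling k m} {n : ℕ} : T.width ≤ n ↔ ∀ i, T.shape i ≤ n := by
  simp [width]

lemma width_le (T : ShapedFilling k m) : T.width ≤ m :=
  width_le_iff.2 T.shape_le

lemma width_eq_shape_zero {T : ShapedFilling k m} (hT : Antitone T.shape) (hk : 0 < k) :
    T.width = T.shape ⟨0, hk⟩ :=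
  le_antisymm (width_le_iff.2 fun _ ↦ hT (Nat.zero_le _)) (le_sup (f := T.shape) (mem_univ _))

lemma height_le (T : ShapedFilling k m) : T.height ≤ k :=
  card_finset_fin_le _

lemma height_eq_iff_forall_ne_zero {T : ShapedFilling k m} : T.height = k ↔ ∀ i, T.shape i ≠ 0 := by
  simpa [height] using card_filter_eq_iff (s := univ) (p := fun i ↦ T.shape i ≠ 0)

lemma width_eq_zero_iff_height_eq_zero (T : ShapedFilling k m) :
    T.width = 0 ↔ T.height = 0 := by
  simp [width, height, filter_eq_empty_iff]

lemma shape_eq_zero_of_height_le {T : ShapedFilling k m} (hT : Antitone T.shape) {i : Fin k}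
    (hi : T.height ≤ i) : T.shape i = 0 := by
  by_contra h
  have hsub : Iic i ⊆ ({j | T.shape j ≠ 0} : Finset (Fin k)) := fun j hj ↦ by
    have hij : T.shape i ≤ T.shape j := hT (mem_Iic.1 hj)
    simp only [mem_filter_univ]
    lia
  have hcard : (i : ℕ) + 1 ≤ T.height := by simpa [height] using card_le_card hsub
  lia

end Basic

section Extend

variable {k m : ℕ} (r s : ℕ)

/-- Adjoin `r` rows and `s` columns of empty boxes to a filling with entries in `α`. -/
def extendFilling {α : Type*} (F : Fin k → Fin m → Option α) :
    Fin (k + r) → Fin (m + s) → Option α :=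
  Fin.append (fun i ↦ Fin.append (F i) fun _ ↦ none) fun _ _ ↦ none

/-- Adjoin `r` rows and `s` columns to the rectangle, without changing the shape or the filling. -/
def extend (T : ShapedFilling k m) : ShapedFilling (k + r) (m + s) :=
  (Fin.append (fun i ↦ (T.1 i).castLE (by lia)) fun _ ↦ 0, extendFilling r s T.2)

lemma card_filter_extendFilling_eq_some {α : Type*} [DecidableEq α]
    (F : Fin k → Fin m → Option α) (x : α) :
    #{p : Fin (k + r) × Fin (m + s) | extendFilling r s F p.1 p.2 = some x} =
      #{p : Fin k × Fin m | F p.1 p.2 = some x} := by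
  rw [card_filter, card_filter, Fintype.sum_prod_type, Fintype.sum_prod_type, Fin.sum_univ_add]
  simp only [Fin.sum_univ_add]
  simp [extendFilling]

lemma isCCT_extendFilling_iff {lam : Fin k → ℕ} (hlam : ∀ i, lam i ≤ m)
    {F : Fin k → Fin m → Option Bool} :
    IsCCT (k + r) (m + s) (Fin.append lam 0) (extendFilling r s F) ↔ IsCCT k m lam F := by
  have hcol (i : Fin k) (j : Fin s) : lam i ≤ m + j := le_add_right (hlam i)
  -- Split every quantifier over rows or columns: an empty adjoined box satisfies each condition
  -- vacuously, except that it must lie outside the shape, which is `hcol` for the old rows.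
  simp [IsCCT, Fin.forall_fin_add, extendFilling, (Fin.strictMono_castAdd _).lt_iff_lt,
    castAdd_lt_natAdd, (castAdd_lt_natAdd _ _).not_gt, hcol]

lemma shape_extend (T : ShapedFilling k m) : (T.extend r s).shape = Fin.append T.shape 0 := by
  funext i
  cases i using Fin.addCases <;> simp [shape, extend]

lemma isCondensedCatalan_extend_iff {T : ShapedFilling k m} :
    (T.extend r s).IsCondensedCatalan ↔ T.IsCondensedCatalan := by
  rw [IsCondensedCatalan, shape_extend, antitone_append_zero_iff, extend,
    isCCT_extendFilling_iff r s T.shape_le, IsCondensedCatalan]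

lemma width_extend (T : ShapedFilling k m) : (T.extend r s).width = T.width :=
  eq_of_forall_ge_iff fun n ↦ by simp [width_le_iff, shape_extend, Fin.forall_fin_add]

lemma height_extend (T : ShapedFilling k m) : (T.extend r s).height = T.height := by
  simp [height, shape_extend, card_filter, Fin.sum_univ_add]

lemma weight_extend {R : Type*} [CommMonoid R] (a b : R) (T : ShapedFilling k m) :
    (T.extend r s).weight a b = a ^ r * b ^ s * T.weight a b := by
  have hα : aCount (k + r) (m + s) (T.extend r s).2 = aCount k m T.2 :=
    card_filter_extendFilling_eq_some r s T.2 true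
  have hβ : bCount (k + r) (m + s) (T.extend r s).2 = bCount k m T.2 :=
    card_filter_extendFilling_eq_some r s T.2 false
  rw [weight, weight, hα, hβ, add_comm k r, add_comm m s, add_assoc, add_assoc, pow_add a r,
    pow_add b s, mul_mul_mul_comm]

lemma extend_injective : Function.Injective (extend r s : ShapedFilling k m → _) := by
  rintro ⟨l, F⟩ ⟨l', F'⟩ h
  obtain ⟨hl, hF⟩ := Prod.ext_iff.1 h
  refine Prod.ext (funext fun i ↦ ?_) (funext₂ fun i c ↦ ?_)
  · simpa [extend] using congrFun hl (Fin.castAdd r i)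
  · simpa [extend, extendFilling] using congrFun₂ hF (Fin.castAdd r i) (Fin.castAdd s c)

lemma exists_extend_eq {T : ShapedFilling (k + r) (m + s)} (hT : T.IsCondensedCatalan)
    (hw : T.width ≤ m) (hh : T.height ≤ k) : ∃ T₀ : ShapedFilling k m, T₀.extend r s = T := by
  have hrow (j : Fin r) : T.shape (Fin.natAdd k j) = 0 :=
    shape_eq_zero_of_height_le hT.1 (hh.trans (by simp))
  have hempty {i} {c : Fin (m + s)} (hc : T.shape i ≤ c) : T.2 i c = none := hT.2.1 i c hc
  refine ⟨(fun i ↦ ⟨T.shape (Fin.castAdd r i), Nat.lt_succ_of_le (width_le_iff.1 hw _)⟩,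
    fun i c ↦ T.2 (Fin.castAdd r i) (Fin.castAdd s c)), Prod.ext (funext fun i ↦ ?_)
    (funext₂ fun i c ↦ ?_)⟩
  · apply Fin.ext
    cases i using Fin.addCases with
    | left i => simp [extend, shape]
    | right j => simpa [extend, shape, eq_comm] using hrow j
  · cases i using Fin.addCases with
    | left i =>
      cases c using Fin.addCases with
      | left c => simp [extend, extendFilling]
      | right c =>
        have hc : T.shape (Fin.castAdd r i) ≤ (Fin.natAdd m c : ℕ) :=
          (width_le_iff.1 hw _).trans (by simp)
        simp [extend, extendFilling, hempty hc]
    | right j => simp [extend, extendFilling, hempty ((hrow j).trans_le (Nat.zero_le _))]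

end Extend

lemma sum_weight_boundingBox_add {R : Type*} [CommSemiring R] (a b : R) (k m r s : ℕ) :
    ∑ T : ShapedFilling (k + r) (m + s) with
        T.IsCondensedCatalan ∧ T.width = m ∧ T.height = k, T.weight a b =
      a ^ r * b ^ s * ∑ T : ShapedFilling k m with
        T.IsCondensedCatalan ∧ T.width = m ∧ T.height = k, T.weight a b := by
  have hbox (T : ShapedFilling k m) :
      ((T.extend r s).IsCondensedCatalan ∧ (T.extend r s).width = m ∧ (T.extend r s).height = k) ↔
        T.IsCondensedCatalan ∧ T.width = m ∧ T.height = k := by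
    rw [isCondensedCatalan_extend_iff, width_extend, height_extend]
  rw [mul_sum]
  refine (sum_nbij (extend r s) (fun T hT ↦ ?_) (extend_injective r s).injOn (fun T hT ↦ ?_)
    fun T _ ↦ (weight_extend r s a b T).symm).symm
  · simpa [hbox] using hT
  · obtain ⟨hcat, hw, hh⟩ := (mem_filter_univ _).1 hT
    obtain ⟨T₀, rfl⟩ := exists_extend_eq r s hcat hw.le hh.le
    exact ⟨T₀, by simpa [hbox] using hT, rfl⟩

end ShapedFilling

open ShapedFilling

lemma Ntab_eq_sum_weight (m k : ℕ) :
    Ntab m k = ∑ T : ShapedFilling k m with T.IsCondensedCatalan,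
      T.weight (MvPolynomial.X 0) (MvPolynomial.X 1) :=
  sum_congr (filter_congr fun _ _ ↦ Iff.rfl) fun _ _ ↦ rfl

lemma N'tab_eq_sum_weight (m k : ℕ) :
    N'tab m k = ∑ T : ShapedFilling k m with
        T.IsCondensedCatalan ∧ T.width = m ∧ T.height = k,
      T.weight (MvPolynomial.X 0) (MvPolynomial.X 1) := by
  rw [N'tab]
  split_ifs with h_both h_one
  · obtain ⟨rfl, rfl⟩ := h_both
    have hT (T : ShapedFilling 0 0) : T.IsCondensedCatalan ∧ T.width = 0 ∧ T.height = 0 := by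
      simp [IsCondensedCatalan, IsCCT, Antitone, width, height]
    simp [hT, weight, aCount, bCount]
  · refine (sum_eq_zero fun T hT ↦ ?_).symm
    obtain ⟨-, hw, hh⟩ := (mem_filter_univ _).1 hT
    have hzero : T.width = 0 ↔ T.height = 0 := T.width_eq_zero_iff_height_eq_zero
    lia
  · have hk : 0 < k := by lia
    refine sum_congr (filter_congr fun T _ ↦ ?_) fun _ _ ↦ rfl
    rw [IsCondensedCatalan, and_assoc]
    refine and_congr_right fun hT ↦ ?_
    rw [width_eq_shape_zero hT hk, height_eq_iff_forall_ne_zero, forall_prop_of_true hk,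
      ← and_assoc, and_comm]
    simp only [Nat.one_le_iff_ne_zero]
    rfl

theorem stmt11_general {R : Type*} [CommSemiring R] (a b : R) (m k : ℕ) :
    ∑ T : ShapedFilling k m with T.IsCondensedCatalan, T.weight a b =
      ∑ m' ∈ range (m + 1), ∑ k' ∈ range (k + 1), a ^ (k - k') * b ^ (m - m') *
        ∑ T : ShapedFilling k' m' with
          T.IsCondensedCatalan ∧ T.width = m' ∧ T.height = k', T.weight a b := by
  have hbox : ∀ T ∈ ({T | T.IsCondensedCatalan} : Finset (ShapedFilling k m)),
      (T.width, T.height) ∈ range (m + 1) ×ˢ range (k + 1) := fun T _ ↦ by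
    simp [T.width_le, T.height_le]
  rw [← sum_fiberwise_of_maps_to hbox, sum_product]
  refine sum_congr rfl fun m' hm' ↦ sum_congr rfl fun k' hk' ↦ ?_
  obtain ⟨s, rfl⟩ := Nat.exists_eq_add_of_le (mem_range_succ_iff.1 hm')
  obtain ⟨r, rfl⟩ := Nat.exists_eq_add_of_le (mem_range_succ_iff.1 hk')
  simp only [filter_filter, Prod.mk.injEq, Nat.add_sub_cancel_left]
  exact sum_weight_boundingBox_add a b k' m' r s

/-- `N_{m,k}(α,β) = Σ_{m'=0}^m Σ_{k'=0}^k α^(k-k') β^(m-m') N'_{m',k'}(α,β)`. -/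
theorem stmt11 (m k : ℕ) :
    Ntab m k
      = ∑ m' ∈ Finset.range (m + 1), ∑ k' ∈ Finset.range (k + 1),
          (MvPolynomial.X 0 : MvPolynomial (Fin 2) ℤ) ^ (k - k') *
            MvPolynomial.X 1 ^ (m - m') * N'tab m' k' := by
  simpa only [Ntab_eq_sum_weight, N'tab_eq_sum_weight] using
    stmt11_general (MvPolynomial.X 0 : MvPolynomial (Fin 2) ℤ) (MvPolynomial.X 1) m k
end
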